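/- Let α > 0 be real and let n ≥ 2 and p ≥ 0 be integers. Then the monic quartic polynomial P(ρ) = ρ⁴ + a₃ ρ³ + a₂ ρ² + a₁ ρ + 1, with coefficients a₃ = −4 α^{-1} (2(n+1) − p), a₂ = −(2 + 8 p α^{-1}), a₁ = 4 α^{-1} (2n + p), has at least one real root ρ̄ satisfying ρ̄ > 1. -/

import Mathlib

/-!
The coefficients sum to `P(1) = -8α⁻¹ < 0`, since the terms in `n` and `p` cancel, while
`P(ρ) → ∞` as `ρ → ∞`; the intermediate value theorem gives a root beyond `1`.
-/

section RootsBeyondAPoint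

open Filter Polynomial

lemma degree_pos_of_eval_neg {R : Type*} [Semiring R] [PartialOrder R] {P : R[X]} {a : R}
    (hlead : 0 ≤ P.leadingCoeff) (ha : P.eval a < 0) : 0 < P.degree := by
  contrapose! ha
  rw [eq_C_of_degree_le_zero ha] at hlead ⊢
  simpa using hlead.not_gt

lemma exists_gt_isRoot_of_eval_neg {P : ℝ[X]} {a : ℝ} (hlead : 0 ≤ P.leadingCoeff)
    (ha : P.eval a < 0) : ∃ r, a < r ∧ P.IsRoot r := by
  have hlim : Tendsto (fun x ↦ P.eval x) atTop atTop :=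
    P.tendsto_atTop_of_leadingCoeff_nonneg (degree_pos_of_eval_neg hlead ha) hlead
  obtain ⟨r, har, hroot⟩ := intermediate_value_Ioi P.continuousOn hlim ha
  exact ⟨r, har, hroot⟩

lemma exists_gt_quartic_eq_zero_of_neg {t a b c d : ℝ}
    (ht : t ^ 4 + a * t ^ 3 + b * t ^ 2 + c * t + d < 0) :
    ∃ x, t < x ∧ x ^ 4 + a * x ^ 3 + b * x ^ 2 + c * x + d = 0 := by
  let P : ℝ[X] := X ^ 4 + C a * X ^ 3 + C b * X ^ 2 + C c * X + C d
  have hmonic : P.Monic := by unfold P; monicity!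
  have heval (x : ℝ) : P.eval x = x ^ 4 + a * x ^ 3 + b * x ^ 2 + c * x + d := by simp [P]
  obtain ⟨x, htx, hx⟩ := exists_gt_isRoot_of_eval_neg (P := P) (a := t)
    (by simp [hmonic.leadingCoeff]) (by rwa [heval])
  exact ⟨x, htx, by rw [← heval, hx.eq_zero]⟩

end RootsBeyondAPoint

theorem exists_root_gt_one_gauss_general {α : ℝ} (hα : 0 < α) (n p : ℝ) :
    ∃ ρ : ℝ, 1 < ρ ∧
      ρ ^ 4 + (-(4 * α⁻¹ * (2 * (n + 1) - p))) * ρ ^ 3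
        + (-(2 + 8 * p * α⁻¹)) * ρ ^ 2
        + (4 * α⁻¹ * (2 * n + p)) * ρ + 1 = 0 := by
  apply exists_gt_quartic_eq_zero_of_neg
  calc
    _ = -(8 * α⁻¹) := by ring
    _ < 0 := neg_neg_of_pos (by positivity)

/-- For `α > 0`, `n ≥ 2`, `p ≥ 0`, the monic quartic
`P(ρ) = ρ⁴ + a₃ρ³ + a₂ρ² + a₁ρ + 1` with Gaussian-quadrature coefficients
`a₃ = −4α⁻¹(2(n+1) − p)`, `a₂ = −(2 + 8pα⁻¹)`, `a₁ = 4α⁻¹(2n + p)`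
has at least one real root `ρ̄ > 1`. -/
theorem exists_root_gt_one_gauss (α : ℝ) (hα : 0 < α) (n p : ℕ) (hn : 2 ≤ n) :
    ∃ ρ : ℝ, 1 < ρ ∧
      ρ ^ 4 + (-(4 * α⁻¹ * (2 * ((n : ℝ) + 1) - (p : ℝ)))) * ρ ^ 3
        + (-(2 + 8 * (p : ℝ) * α⁻¹)) * ρ ^ 2
        + (4 * α⁻¹ * (2 * (n : ℝ) + (p : ℝ))) * ρ + 1 = 0 :=
  exists_root_gt_one_gauss_general hα n p
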